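/- arXiv:math/0604047 — 3 statements merged into one kernel-verified Lean document; each statement's English description precedes it below -/
import Mathlib

section
/- Let X be an infinite compact metric space, let α_1, …, α_d be pairwise commuting homeomorphisms of X, let μ be a strictly positive Borel probability measure on X invariant under the action of α_1, …, α_d, and suppose that α_1 is minimal and that μ is the unique α_1-invariant Borel probability measure on X. Then there exist: a compact metrizable space Y homeomorphic to the Cantor space {0,1}^ℕ; pairwise commuting homeomorphisms β_1, …, β_d of Y with β_1 minimal; a Borel probability measure ν on Y invariant under the action of β_1, …, β_d such that ν is the unique β_1-invariant Borel probability measure on Y; and a continuous surjection s : Y → X such that s ∘ β_j = α_j ∘ s for every j = 1, …, d and the pushforward measure s_*ν equals μ. -/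
/-- A bundled compact metric space equipped with its Borel σ-algebra. -/
structure CompactMetricBundle where
  carrier : Type
  [metricSpace : MetricSpace carrier]
  [compactSpace : CompactSpace carrier]
  [measurableSpace : MeasurableSpace carrier]
  [borelSpace : BorelSpace carrier]

attribute [instance] CompactMetricBundle.metricSpace CompactMetricBundle.compactSpace
  CompactMetricBundle.measurableSpace CompactMetricBundle.borelSpace

open MeasureTheory

/-- A homeomorphism is minimal if its only closed invariant sets are `∅` and the whole
space. -/
def IsMinimalHomeo {Y : Type*} [TopologicalSpace Y] (β : Y ≃ₜ Y) : Prop :=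
  ∀ F : Set Y, IsClosed F → β '' F = F → F = ∅ ∨ F = Set.univ


theorem brouwer_cantor {Y : Type*} [TopologicalSpace Y] [CompactSpace Y] [T2Space Y]
    [SecondCountableTopology Y] [TotallyDisconnectedSpace Y] [Nonempty Y]
    (hperf : ∀ y : Y, ¬ IsOpen ({y} : Set Y)) : Nonempty (Y ≃ₜ (ℕ → Bool)) := by
  classical
  have : Countable (TopologicalSpace.Clopens Y) :=
    TopologicalSpace.Clopens.countable_iff_secondCountable.mpr inferInstance
  obtain ⟨C, hC⟩ := exists_surjective_nat (TopologicalSpace.Clopens Y)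
  have : TotallySeparatedSpace Y := inferInstance
  -- splitting
  have split : ∀ (n : ℕ) (A : Set Y), ∃ S : Set Y, IsClopen A → A.Nonempty →
      IsClopen S ∧ (A ∩ S).Nonempty ∧ (A \ S).Nonempty ∧
      ((A ∩ C n).Nonempty → (A \ C n).Nonempty → S = C n) := by
    intro n A
    by_cases h : (A ∩ C n).Nonempty ∧ (A \ C n).Nonempty
    · exact ⟨C n, fun _ _ => ⟨(C n).isClopen, h.1, h.2, fun _ _ => rfl⟩⟩
    · by_cases hA : IsClopen A ∧ A.Nonempty
      · obtain ⟨hA, y, hy⟩ := hA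
        have : ∃ z ∈ A, z ≠ y := by
          by_contra! hcon
          have : A = {y} := Set.eq_singleton_iff_unique_mem.mpr ⟨hy, hcon⟩
          exact hperf y (this ▸ hA.isOpen)
        obtain ⟨z, hz, hzy⟩ := this
        obtain ⟨S, hS, hzS, hyS⟩ := exists_isClopen_of_totally_separated hzy
        exact ⟨S, fun _ _ => ⟨hS, ⟨z, hz, hzS⟩, ⟨y, hy, hyS⟩, fun a b => absurd ⟨a, b⟩ h⟩⟩
      · exact ⟨∅, fun a b => absurd ⟨a, b⟩ hA⟩
  choose S hS using split
  let step : ℕ → Set Y → Bool → Set Y := fun n A b => if b then A ∩ S n A else A \ S n A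
  let B : (ℕ → Bool) → ℕ → Set Y := fun b n => Nat.rec Set.univ (fun n A => step n A (b n)) n
  have B0 : ∀ b, B b 0 = Set.univ := fun _ => rfl
  have Bs : ∀ b n, B b (n+1) = step n (B b n) (b n) := fun _ _ => rfl
  have Bprop : ∀ b n, IsClopen (B b n) ∧ (B b n).Nonempty := by
    intro b n
    induction n with
    | zero => exact ⟨isClopen_univ, Set.univ_nonempty⟩
    | succ n ih =>
      obtain ⟨h1, h2, h3, -⟩ := hS n _ ih.1 ih.2
      rw [Bs]
      by_cases hb : b n
      · simp only [step, hb, if_true]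
        exact ⟨ih.1.inter h1, h2⟩
      · simp only [step, hb]
        exact ⟨ih.1.diff h1, h3⟩
  have Bext : ∀ b b' n, (∀ k < n, b k = b' k) → B b n = B b' n := by
    intro b b' n h
    induction n with
    | zero => rfl
    | succ n ih =>
      rw [Bs, Bs, ih (fun k hk => h k (by omega)), h n (by omega)]
  have Bmono : ∀ b n, B b (n+1) ⊆ B b n := by
    intro b n
    rw [Bs]
    by_cases hb : b n
    · simp only [step, hb, if_true]; exact Set.inter_subset_left
    · simp only [step, hb]; exact Set.sdiff_subset
  -- g b is a point of the intersection
  have hpt : ∀ b, (⋂ n, B b n).Nonempty := fun b =>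
    IsCompact.nonempty_iInter_of_sequence_nonempty_isCompact_isClosed _ (Bmono b)
      (fun n => (Bprop b n).2) isCompact_univ (fun n => (Bprop b n).1.isClosed)
  choose g hg using hpt
  have hg' : ∀ b n, g b ∈ B b n := fun b n => Set.mem_iInter.mp (hg b) n
  -- disjointness
  have Bdisj : ∀ b b' y, (∀ n, y ∈ B b n) → (∀ n, y ∈ B b' n) → b = b' := by
    intro b b' y h h'
    have : ∀ n, ∀ k < n, b k = b' k := by
      intro n
      induction n with
      | zero => intro k hk; omega
      | succ n ih =>
        intro k hk
        rcases Nat.lt_succ_iff_lt_or_eq.mp hk with hk | rfl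
        · exact ih k hk
        · have e := Bext b b' k ih
          have h1 := h (k+1)
          have h2 := h' (k+1)
          rw [Bs] at h1 h2
          rw [← e] at h2
          cases hb : b k <;> cases hb' : b' k <;> simp [step, hb, hb'] at h1 h2 ⊢ <;> tauto
    funext k
    exact this (k+1) k (by omega)
  have Bsingle : ∀ b y z, (∀ n, y ∈ B b n) → (∀ n, z ∈ B b n) → y = z := by
    intro b y z hy hz
    by_contra hne
    obtain ⟨U, hU, hyU, hzU⟩ := exists_isClopen_of_totally_separated hne
    obtain ⟨n, hn⟩ := hC ⟨U, hU⟩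
    have hCU : (C n : Set Y) = U := by rw [hn]; rfl
    have hSn := (hS n (B b n) (Bprop b n).1 (Bprop b n).2).2.2.2
      (by rw [hCU]; exact ⟨y, hy n, hyU⟩) (by rw [hCU]; exact ⟨z, hz n, hzU⟩)
    rw [hCU] at hSn
    have h1 := hy (n+1)
    have h2 := hz (n+1)
    rw [Bs] at h1 h2
    have hzU' : z ∉ U := hzU
    cases hb : b n <;> simp [step, hb, hSn] at h1 h2 <;> tauto
  have ginj : Function.Injective g := fun b b' h => Bdisj b b' (g b) (hg' b) (h ▸ hg' b')
  have gsurj : Function.Surjective g := by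
    intro y
    let T : ℕ → Set Y := fun n => Nat.rec Set.univ (fun n A => step n A (decide (y ∈ S n A))) n
    let b : ℕ → Bool := fun n => decide (y ∈ S n (T n))
    have hT : ∀ n, B b n = T n := by
      intro n
      induction n with
      | zero => rfl
      | succ n ih => rw [Bs, ih]
    have hy : ∀ n, y ∈ B b n := by
      intro n
      induction n with
      | zero => trivial
      | succ n ih =>
        rw [Bs]
        by_cases h : y ∈ S n (T n)
        · simp only [step, b, h, decide_true, if_true, hT]
          exact ⟨hT n ▸ ih, h⟩
        · simp only [step, b, h, decide_false, hT]
          exact ⟨hT n ▸ ih, h⟩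
    exact ⟨b, Bsingle b _ _ (hg' b) hy⟩
  have Banti : ∀ b, Antitone (B b) := fun b => antitone_nat_of_succ_le (Bmono b)
  have gcont : Continuous g := by
    rw [continuous_iff_continuousAt]
    intro b U hU
    -- some B b n ⊆ U
    obtain ⟨V, hVU, hV, hgV⟩ := mem_nhds_iff.mp hU
    obtain ⟨n, hn⟩ : ∃ n, B b n ⊆ V := by
      obtain ⟨n, hn⟩ := exists_subset_nhds_of_isCompact' (V := B b) (U := V)
        (directed_of_isDirected_le (fun i j h => Banti b h))
        (fun n => (Bprop b n).1.isClosed.isCompact) (fun n => (Bprop b n).1.isClosed) (by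
        intro x hx
        have := Bsingle b x (g b) (fun n => Set.mem_iInter.mp hx n) (hg' b)
        rw [this]; exact hV.mem_nhds hgV)
      exact ⟨n, hn⟩
    have : {b' : ℕ → Bool | ∀ k ∈ Finset.range n, b' k = b k} ∈ nhds b := by
      have : {b' : ℕ → Bool | ∀ k ∈ Finset.range n, b' k = b k}
          = ⋂ k ∈ Finset.range n, (fun b' : ℕ → Bool => b' k) ⁻¹' {b k} := by ext; simp
      rw [this]
      refine IsOpen.mem_nhds ?_ (by simp)
      exact isOpen_biInter_finset fun k _ => (isOpen_discrete _).preimage (continuous_apply k)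
    rw [Filter.mem_map]
    filter_upwards [this] with b' hb'
    apply hVU
    apply hn
    rw [Bext b b' n (fun k hk => (hb' k (Finset.mem_range.mpr hk)).symm)]
    exact hg' b' n
  exact ⟨(gcont.homeoOfEquivCompactToT2 (f := Equiv.ofBijective g ⟨ginj, gsurj⟩)).symm⟩

theorem minimal_perfect {Y : Type*} [TopologicalSpace Y] [CompactSpace Y] [Infinite Y]
    (β : Y ≃ₜ Y) (h : IsMinimalHomeo β) (y : Y) : ¬ IsOpen ({y} : Set Y) := by
  intro ho
  let O : Set Y := ⋃ n : ℤ, (β ^ n : Y ≃ₜ Y) '' {y}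
  have hO : IsOpen O := isOpen_iUnion fun n => (β ^ n : Y ≃ₜ Y).isOpenMap _ ho
  have hinv : β '' O = O := by
    ext z
    constructor
    · rintro ⟨w, hw, rfl⟩
      obtain ⟨n, hn⟩ := Set.mem_iUnion.mp hw
      simp only [Set.image_singleton, Set.mem_singleton_iff] at hn
      subst hn
      refine Set.mem_iUnion.mpr ⟨1 + n, ?_⟩
      rw [zpow_one_add]
      simp
    · intro hw
      obtain ⟨n, hn⟩ := Set.mem_iUnion.mp hw
      simp only [Set.image_singleton, Set.mem_singleton_iff] at hn
      subst hn
      refine ⟨(β ^ (n - 1) : Y ≃ₜ Y) y, Set.mem_iUnion.mpr ⟨n - 1, by simp⟩, ?_⟩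
      conv_rhs => rw [show n = 1 + (n - 1) by ring, zpow_one_add]
      simp
  have hc : β '' Oᶜ = Oᶜ := by
    rw [Set.image_compl_eq β.bijective, hinv]
  have hyO : y ∈ O := Set.mem_iUnion.mpr ⟨0, by simp⟩
  have hOu : O = Set.univ := by
    rcases h _ hO.isClosed_compl hc with h1 | h1
    · exact Set.compl_empty_iff.mp h1
    · exact absurd hyO (by have : y ∈ Oᶜ := h1 ▸ Set.mem_univ y
                           exact this)
  have hdisc : DiscreteTopology Y := by
    rw [discreteTopology_iff_isOpen_singleton]
    intro z
    obtain ⟨n, hn⟩ := Set.mem_iUnion.mp (hOu ▸ Set.mem_univ z : z ∈ O)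
    simp only [Set.image_singleton, Set.mem_singleton_iff] at hn
    have := (β ^ n : Y ≃ₜ Y).isOpenMap _ ho
    rwa [Set.image_singleton, ← hn] at this
  have : Finite Y := finite_of_compact_of_discrete
  exact not_finite Y

/-- the shift homeomorphism on the big product -/
def bigShift {X : Type*} [TopologicalSpace X] (Γ : Subgroup (X ≃ₜ X)) (h : Γ) :
    (X × (ℕ × Γ → Bool)) ≃ₜ (X × (ℕ × Γ → Bool)) where
  toFun p := (h.1 p.1, fun q => p.2 (q.1, q.2 * h))
  invFun p := (h.1.symm p.1, fun q => p.2 (q.1, q.2 * h⁻¹))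
  left_inv p := by ext <;> simp
  right_inv p := by ext <;> simp
  continuous_toFun := by
    have := h.1.continuous
    fun_prop
  continuous_invFun := by
    have := h.1.symm.continuous
    fun_prop

theorem core {X : Type*} [MetricSpace X] [CompactSpace X] [Infinite X]
    (Γ : Subgroup (X ≃ₜ X)) [Countable Γ] (a : Γ) (hmin : IsMinimalHomeo a.1)
    (U : ℕ → Set X) (hU : ∀ n, IsOpen (U n))
    (hsep : ∀ x x', x ≠ x' → ∃ n, x ∈ U n ∧ x' ∉ closure (U n))
    (X0 : Set X) (hX0 : X0 = {x | ∀ n (g : Γ), g.1 x ∉ frontier (U n)}) (hd : Dense X0) :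
    ∃ (β : Γ → (ℕ → Bool) ≃ₜ (ℕ → Bool)) (s : C(ℕ → Bool, X)) (σ : X → (ℕ → Bool)),
      (∀ g h y, β (g * h) y = β g (β h y)) ∧ IsMinimalHomeo (β a) ∧ Function.Surjective s ∧
      (∀ g y, s (β g y) = g.1 (s y)) ∧ ContinuousOn σ X0 ∧ (∀ x ∈ X0, s (σ x) = x) ∧
      (∀ y, s y ∈ X0 → σ (s y) = y) := by
  classical
  let φ : X → X × (ℕ × Γ → Bool) := fun x => (x, fun q => decide (q.2.1 x ∈ U q.1))
  let Y : Set (X × (ℕ × Γ → Bool)) := closure (φ '' X0)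
  have hX0m : ∀ x ∈ X0, ∀ n (g : Γ), g.1 x ∈ U n ∨ g.1 x ∉ closure (U n) := by
    intro x hx n g
    rw [hX0] at hx
    by_contra! hcon
    exact hx n g ⟨hcon.2, by rw [(hU n).interior_eq]; exact hcon.1⟩
  have hX0inv : ∀ x ∈ X0, ∀ h : Γ, h.1 x ∈ X0 := by
    intro x hx h
    rw [hX0] at hx ⊢
    intro n g
    exact hx n (g * h)
  -- key
  have key1 : ∀ p ∈ Y, ∀ n (g : Γ), g.1 p.1 ∈ U n → p.2 (n, g) = true := by
    intro p hp n g hg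
    by_contra hne
    have hop : IsOpen {p : X × (ℕ × Γ → Bool) | g.1 p.1 ∈ U n ∧ p.2 (n, g) = false} := by
      refine IsOpen.inter ((hU n).preimage (g.1.continuous.comp continuous_fst)) ?_
      have hc : Continuous (fun p : X × (ℕ × Γ → Bool) => p.2 (n, g)) :=
        (continuous_apply (n, g)).comp continuous_snd
      exact (isOpen_discrete ({false} : Set Bool)).preimage hc
    obtain ⟨q, hq, x, hx, rfl⟩ := mem_closure_iff.mp hp _ hop ⟨hg, by simpa using hne⟩
    have h1 : g.1 x ∈ U n := hq.1
    have h2 : decide (g.1 x ∈ U n) = false := hq.2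
    simp [h1] at h2
  have key2 : ∀ p ∈ Y, ∀ n (g : Γ), g.1 p.1 ∉ closure (U n) → p.2 (n, g) = false := by
    intro p hp n g hg
    by_contra hne
    have hop : IsOpen {p : X × (ℕ × Γ → Bool) | g.1 p.1 ∈ (closure (U n))ᶜ ∧ p.2 (n, g) = true} := by
      refine IsOpen.inter (isClosed_closure.isOpen_compl.preimage
        (g.1.continuous.comp continuous_fst)) ?_
      have hc : Continuous (fun p : X × (ℕ × Γ → Bool) => p.2 (n, g)) :=
        (continuous_apply (n, g)).comp continuous_snd
      exact (isOpen_discrete ({true} : Set Bool)).preimage hc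
    obtain ⟨q, hq, x, hx, rfl⟩ := mem_closure_iff.mp hp _ hop ⟨hg, by simpa using hne⟩
    have h1 : g.1 x ∉ closure (U n) := hq.1
    have h2 : decide (g.1 x ∈ U n) = true := hq.2
    exact h1 (subset_closure (of_decide_eq_true h2))
  have hfib : ∀ p ∈ Y, p.1 ∈ X0 → φ p.1 = p := by
    intro p hp hp0
    refine Prod.ext rfl ?_
    funext ⟨n, g⟩
    rcases hX0m _ hp0 n g with h | h
    · rw [key1 p hp n g h]; exact decide_eq_true h
    · rw [key2 p hp n g h]
      exact decide_eq_false (fun h' => h (subset_closure h'))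
  have hφY : ∀ x ∈ X0, φ x ∈ Y := fun x hx => subset_closure ⟨x, hx, rfl⟩
  have hφc : ContinuousOn φ X0 := by
    refine continuousOn_id.prodMk ?_
    rw [continuousOn_pi]
    rintro ⟨n, g⟩ x hx
    apply ContinuousAt.continuousWithinAt
    rcases hX0m _ hx n g with h | h
    · apply (continuousAt_const (y := true)).congr
      filter_upwards [((hU n).preimage g.1.continuous).mem_nhds h] with z hz
      exact (decide_eq_true hz).symm
    · apply (continuousAt_const (y := false)).congr
      filter_upwards [(isClosed_closure.isOpen_compl.preimage g.1.continuous).mem_nhds h] with z hz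
      exact (decide_eq_false (fun h' => hz (subset_closure h'))).symm
  have hYc : IsClosed Y := isClosed_closure
  have : CompactSpace Y := isCompact_iff_compactSpace.mp hYc.isCompact
  -- injectivity of the second projection
  have hinj : Function.Injective (fun p : Y => p.1.2) := by
    rintro ⟨p, hp⟩ ⟨q, hq⟩ (h : p.2 = q.2)
    refine Subtype.ext (Prod.ext ?_ h)
    by_contra hne
    obtain ⟨n, h1, h2⟩ := hsep _ _ hne
    have e1 := key1 p hp n 1 h1
    have e2 := key2 q hq n 1 h2
    rw [h, e2] at e1
    cases e1
  have hsndc : Continuous (fun p : Y => p.1.2) := continuous_snd.comp continuous_subtype_val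
  have : TotallyDisconnectedSpace Y :=
    (hsndc.isClosedEmbedding hinj).isEmbedding.isTotallyDisconnected_range.mp
      (isTotallyDisconnected_of_totallyDisconnectedSpace _)
  -- shift
  have hsφ : ∀ h x, bigShift Γ h (φ x) = φ (h.1 x) := by
    intro h x
    rfl
  have hsY : ∀ h : Γ, ∀ p ∈ Y, bigShift Γ h p ∈ Y := by
    intro h p hp
    refine map_mem_closure (bigShift Γ h).continuous hp ?_
    rintro _ ⟨x, hx, rfl⟩
    exact ⟨h.1 x, hX0inv x hx h, rfl⟩
  have hsmul : ∀ g h p, bigShift Γ (g * h) p = bigShift Γ g (bigShift Γ h p) := by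
    intro g h p
    refine Prod.ext rfl ?_
    funext q
    change p.2 (q.1, q.2 * (g * h)) = p.2 (q.1, q.2 * g * h)
    rw [mul_assoc]
  have hone : ∀ p, bigShift Γ 1 p = p := by
    intro p
    refine Prod.ext rfl ?_
    funext q
    change p.2 (q.1, q.2 * 1) = p.2 (q.1, q.2)
    rw [mul_one]
  let γ : Γ → Y ≃ₜ Y := fun h => (bigShift Γ h).subtype (fun p => ⟨hsY h p, fun hp => by
    have := hsY h⁻¹ _ hp
    rwa [← hsmul, inv_mul_cancel, hone] at this⟩)
  have hγ : ∀ h (p : Y), ((γ h p : Y) : X × (ℕ × Γ → Bool)) = bigShift Γ h p := fun _ _ => rfl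
  let t : Y → X := fun p => p.1.1
  have htc : Continuous t := continuous_fst.comp continuous_subtype_val
  have htγ : ∀ h p, t (γ h p) = h.1 (t p) := fun _ _ => rfl
  have htsurj : Function.Surjective t := by
    have h1 : IsClosed (Set.range t) := (isCompact_range htc).isClosed
    have h2 : X0 ⊆ Set.range t := fun x hx => ⟨⟨φ x, hφY x hx⟩, rfl⟩
    rw [← Set.range_eq_univ]
    exact Set.eq_univ_of_univ_subset (hd.closure_eq ▸ h1.closure_subset_iff.mpr h2)
  have : Infinite Y := Infinite.of_surjective t htsurj
  have hminγ : IsMinimalHomeo (γ a) := by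
    intro F hF hFi
    rcases F.eq_empty_or_nonempty with h | h
    · exact Or.inl h
    right
    have h1 : IsClosed (t '' F) := (hF.isCompact.image htc).isClosed
    have h2 : a.1 '' (t '' F) = t '' F := by
      conv_rhs => rw [← hFi]
      rw [Set.image_image, Set.image_image]
      rfl
    have h3 : t '' F = Set.univ := by
      rcases hmin _ h1 h2 with h4 | h4
      · exact absurd (h.image t) (by rw [h4]; simp)
      · exact h4
    have h4 : φ '' X0 ⊆ Subtype.val '' F := by
      rintro _ ⟨x, hx, rfl⟩
      obtain ⟨p, hp, rfl⟩ : x ∈ t '' F := h3 ▸ Set.mem_univ x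
      exact ⟨p, hp, (hfib p.1 p.2 hx).symm⟩
    have h5 : IsClosed (Subtype.val '' F : Set (X × (ℕ × Γ → Bool))) :=
      hYc.isClosedEmbedding_subtypeVal.isClosedMap _ hF
    have h6 : Y ⊆ Subtype.val '' F := h5.closure_subset_iff.mpr h4
    refine Set.eq_univ_of_forall fun p => ?_
    obtain ⟨q, hq, hqp⟩ := h6 p.2
    rwa [← Subtype.ext hqp]
  obtain ⟨e⟩ := brouwer_cantor (minimal_perfect (γ a) hminγ)
  let σ : X → Y := fun x => if hx : x ∈ X0 then ⟨φ x, hφY x hx⟩ else Classical.arbitrary Y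
  have hσ : ∀ x (hx : x ∈ X0), σ x = ⟨φ x, hφY x hx⟩ := fun x hx => dif_pos hx
  have hσc : ContinuousOn σ X0 := by
    rw [Topology.IsInducing.subtypeVal.continuousOn_iff]
    refine hφc.congr fun x hx => ?_
    simp [hσ x hx]
  refine ⟨fun h => (e.symm.trans (γ h)).trans e, ⟨fun y => t (e.symm y), htc.comp e.symm.continuous⟩,
    fun x => e (σ x), ?_, ?_, ?_, ?_, ?_, ?_, ?_⟩
  · intro g h y
    simp only [Homeomorph.trans_apply, Homeomorph.symm_apply_apply]
    exact congrArg e (Subtype.ext (hsmul _ _ _))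
  · intro F hF hFi
    have h1 := hminγ (e ⁻¹' F) (hF.preimage e.continuous) (by
      apply e.injective.image_injective
      rw [Set.image_preimage_eq _ e.surjective]
      conv_rhs => rw [← hFi]
      conv_rhs => rw [← Set.image_preimage_eq F e.surjective]
      simp only [Set.image_image]
      simp)
    rcases h1 with h1 | h1
    · left
      rw [← Set.image_preimage_eq F e.surjective, h1, Set.image_empty]
    · right
      rw [← Set.image_preimage_eq F e.surjective, h1, Set.image_univ, e.surjective.range_eq]
  · exact htsurj.comp e.symm.surjective
  · intro g y
    simp [htγ]
  · exact e.continuous.comp_continuousOn hσc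
  · intro x hx
    simp [hσ x hx, t, φ]
  · intro y hy
    change t (e.symm y) ∈ X0 at hy
    change e (σ (t (e.symm y))) = y
    rw [hσ _ hy, ← Homeomorph.eq_symm_apply]
    exact Subtype.ext (hfib _ (e.symm y).2 hy)

theorem map_eq_of_image {Z : Type*} [TopologicalSpace Z] [MeasurableSpace Z] [BorelSpace Z]
    (f : Z ≃ₜ Z) (m : Measure Z) (h : ∀ E : Set Z, MeasurableSet E → m (f '' E) = m E) :
    Measure.map f m = m := by
  ext E hE
  rw [Measure.map_apply f.continuous.measurable hE,
    ← h _ (f.continuous.measurable hE), Set.image_preimage_eq _ f.surjective]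

theorem image_of_map_eq {Z : Type*} [TopologicalSpace Z] [MeasurableSpace Z] [BorelSpace Z]
    (f : Z ≃ₜ Z) (m : Measure Z) (h : Measure.map f m = m) :
    ∀ E : Set Z, MeasurableSet E → m (f '' E) = m E := by
  intro E hE
  have h1 : MeasurableSet (f '' E) := f.measurableEmbedding.measurableSet_image.mpr hE
  conv_lhs => rw [← h]
  rw [Measure.map_apply f.continuous.measurable h1, Set.preimage_image_eq _ f.injective]

theorem exists_sep_family {X : Type*} [MetricSpace X] [CompactSpace X] [Infinite X]
    [MeasurableSpace X] [BorelSpace X] (μ : Measure X) [IsProbabilityMeasure μ] :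
    ∃ U : ℕ → Set X, (∀ n, IsOpen (U n)) ∧ (∀ n, μ (frontier (U n)) = 0) ∧
      ∀ x x', x ≠ x' → ∃ n, x ∈ U n ∧ x' ∉ closure (U n) := by
  have hr : ∀ p : ℕ × ℕ, ∃ r ∈ Set.Ioo (1 / (2 * ((p.2 : ℝ) + 1))) (1 / ((p.2 : ℝ) + 1)),
      μ (frontier (Metric.thickening r {TopologicalSpace.denseSeq X p.1})) = 0 := by
    intro p
    apply exists_null_frontier_thickening
    have : (0 : ℝ) < (p.2 : ℝ) + 1 := by positivity
    apply one_div_lt_one_div_of_lt this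
    linarith
  choose r hr1 hr2 using hr
  refine ⟨fun n => Metric.thickening (r n.unpair)
    {TopologicalSpace.denseSeq X n.unpair.1}, fun n => Metric.isOpen_thickening,
    fun n => hr2 _, ?_⟩
  intro x x' hne
  have hδ : 0 < dist x x' := dist_pos.mpr hne
  obtain ⟨k, hk⟩ := exists_nat_one_div_lt (half_pos hδ)
  have hk0 : (0 : ℝ) < 1 / (2 * ((k : ℝ) + 1)) := by positivity
  obtain ⟨_, ⟨i, rfl⟩, hi⟩ := Metric.mem_closure_iff.mp
    (TopologicalSpace.denseRange_denseSeq X x) _ hk0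
  obtain ⟨h1, h2⟩ := hr1 (i, k)
  simp only at h1 h2
  refine ⟨Nat.pair i k, ?_, ?_⟩
  · simp only [Nat.unpair_pair, Metric.thickening_singleton, Metric.mem_ball]
    linarith
  · simp only [Nat.unpair_pair, Metric.thickening_singleton]
    intro hx'
    have h3 : dist x' (TopologicalSpace.denseSeq X i) ≤ r (i, k) :=
      Metric.mem_closedBall.mp (Metric.closure_ball_subset_closedBall hx')
    have h4 := dist_triangle_right x x' (TopologicalSpace.denseSeq X i)
    linarith

/-- Corollary 3.3 (uniquely ergodic case): if moreover `μ` is the unique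
`α₁`-invariant Borel probability measure, the Cantor extension can be taken so that `ν`
is the unique `β₁`-invariant Borel probability measure. -/
theorem stmt_6 {X : Type*} [MetricSpace X] [CompactSpace X] [Infinite X]
    [MeasurableSpace X] [BorelSpace X]
    (d : ℕ) (hd : 0 < d) (α : Fin d → X ≃ₜ X)
    (hcomm : ∀ i j : Fin d, ∀ x : X, α i (α j x) = α j (α i x))
    (hmin : IsMinimalHomeo (α ⟨0, hd⟩))
    (μ : Measure X) [IsProbabilityMeasure μ]
    (hpos : ∀ U : Set X, IsOpen U → U.Nonempty → 0 < μ U)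
    (hinv : ∀ (j : Fin d) (E : Set X), MeasurableSet E → μ ((α j) '' E) = μ E)
    (hue : ∀ μ' : Measure X, IsProbabilityMeasure μ' →
      (∀ E : Set X, MeasurableSet E → μ' ((α ⟨0, hd⟩) '' E) = μ' E) → μ' = μ) :
    ∃ (Y : CompactMetricBundle) (β : Fin d → Y.carrier ≃ₜ Y.carrier)
      (ν : Measure Y.carrier) (s : C(Y.carrier, X)),
      Nonempty (Y.carrier ≃ₜ (ℕ → Bool)) ∧
      (∀ i j : Fin d, ∀ y : Y.carrier, β i (β j y) = β j (β i y)) ∧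
      IsMinimalHomeo (β ⟨0, hd⟩) ∧
      IsProbabilityMeasure ν ∧
      (∀ (j : Fin d) (E : Set Y.carrier), MeasurableSet E → ν ((β j) '' E) = ν E) ∧
      (∀ ν' : Measure Y.carrier, IsProbabilityMeasure ν' →
        (∀ E : Set Y.carrier, MeasurableSet E → ν' ((β ⟨0, hd⟩) '' E) = ν' E) → ν' = ν) ∧
      Function.Surjective s ∧
      (∀ (j : Fin d) (y : Y.carrier), s (β j y) = α j (s y)) ∧
      Measure.map s ν = μ := by
  classical
  -- the countable group generated
  let Γ : Subgroup (X ≃ₜ X) := (FreeGroup.lift α).range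
  have hΓc : Countable Γ := by
    have : Countable (FreeGroup (Fin d)) := by
      unfold FreeGroup
      infer_instance
    exact (Set.countable_range (FreeGroup.lift α)).to_subtype
  have hα : ∀ j, α j ∈ Γ := fun j => ⟨FreeGroup.of j, by simp⟩
  let A : Fin d → Γ := fun j => ⟨α j, hα j⟩
  -- invariance as pushforward
  have hmapα : ∀ j, Measure.map (α j) μ = μ := fun j => map_eq_of_image (α j) μ (hinv j)
  have hmapΓ : ∀ g : FreeGroup (Fin d), Measure.map (FreeGroup.lift α g) μ = μ := by
    intro g
    induction g using FreeGroup.induction_on with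
    | C1 => 
      rw [map_one]
      exact Measure.map_id
    | of j => simpa using hmapα j
    | inv_of j _ =>
      rw [map_inv, FreeGroup.lift_apply_of]
      conv_lhs => rw [← hmapα j]
      rw [Measure.map_map ((α j)⁻¹ : X ≃ₜ X).continuous.measurable (α j).continuous.measurable]
      have : ⇑((α j)⁻¹ : X ≃ₜ X) ∘ ⇑(α j) = id := by
        funext x
        exact (α j).symm_apply_apply x
      rw [this, Measure.map_id]
    | mul x y hx hy =>
      rw [map_mul]
      have : ⇑(FreeGroup.lift α x * FreeGroup.lift α y : X ≃ₜ X)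
        = ⇑(FreeGroup.lift α x) ∘ ⇑(FreeGroup.lift α y) := rfl
      rw [this, ← Measure.map_map (FreeGroup.lift α x).continuous.measurable
        (FreeGroup.lift α y).continuous.measurable, hy, hx]
  have hΓinv : ∀ g : Γ, Measure.map g.1 μ = μ := by
    rintro ⟨_, g, rfl⟩
    exact hmapΓ g
  -- the sets U
  obtain ⟨U, hU, hUf, hsep⟩ := exists_sep_family μ
  let X0 : Set X := {x | ∀ n (g : Γ), g.1 x ∉ frontier (U n)}
  have hX0ae : ∀ᵐ x ∂μ, x ∈ X0 := by
    rw [show (∀ᵐ x ∂μ, x ∈ X0) ↔ ∀ᵐ x ∂μ, ∀ n (g : Γ), g.1 x ∉ frontier (U n) from Iff.rfl]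
    rw [ae_all_iff]
    intro n
    rw [ae_all_iff]
    intro g
    have h1 : μ (g.1 ⁻¹' frontier (U n)) = 0 := by
      rw [← Measure.map_apply g.1.continuous.measurable isClosed_frontier.measurableSet, hΓinv, hUf]
    exact measure_eq_zero_iff_ae_notMem.mp h1
  have hX0m : MeasurableSet X0 := by
    have : X0 = ⋂ n, ⋂ g : Γ, (g.1 ⁻¹' frontier (U n))ᶜ := by
      ext x; simp [X0]
    rw [this]
    exact MeasurableSet.iInter fun n => MeasurableSet.iInter fun g =>
      (isClosed_frontier.preimage g.1.continuous).measurableSet.compl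
  have hX0d : Dense X0 := by
    rw [dense_iff_inter_open]
    intro V hV hVn
    by_contra hcon
    have h1 : V ⊆ X0ᶜ := fun x hx hx0 => hcon ⟨x, hx, hx0⟩
    exact (hpos V hV hVn).ne' (measure_mono_null h1 (mem_ae_iff.mp hX0ae))
  obtain ⟨β, s, σ, hβmul, hβmin, hs, hsβ, hσc, hsσ, hσs⟩ :=
    core Γ (A ⟨0, hd⟩) hmin U hU hsep X0 rfl hX0d
  letI : MetricSpace (ℕ → Bool) := TopologicalSpace.metrizableSpaceMetric (ℕ → Bool)
  have hσae : AEMeasurable σ μ := by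
    have := hσc.aemeasurable (μ := μ) hX0m
    rwa [Measure.restrict_eq_self_of_ae_mem hX0ae] at this
  have hX0inv : ∀ x ∈ X0, ∀ h : Γ, h.1 x ∈ X0 := by
    intro x hx h n g
    exact hx n (g * h)
  have hβm : ∀ g, Measurable (β g) := fun g => (β g).continuous.measurable
  have hsm : Measurable s := s.continuous.measurable
  refine ⟨⟨ℕ → Bool⟩, fun j => β (A j), Measure.map σ μ, s, ⟨Homeomorph.refl _⟩, ?_, hβmin,
    Measure.isProbabilityMeasure_map hσae, ?_, ?_, hs, fun j y => hsβ _ _, ?_⟩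
  · intro i j y
    rw [← hβmul, ← hβmul]
    congr 2
    exact Subtype.ext (Homeomorph.ext fun x => hcomm i j x)
  · intro j E hE
    refine image_of_map_eq (β (A j)) _ ?_ E hE
    have e1 : Measure.map (β (A j)) (Measure.map σ μ) = Measure.map (β (A j) ∘ σ) μ :=
      AEMeasurable.map_map_of_aemeasurable (hβm _).aemeasurable hσae
    have e2 : Measure.map (σ ∘ α j) μ = Measure.map σ μ := by
      rw [← AEMeasurable.map_map_of_aemeasurable (by rwa [hmapα])
        (α j).continuous.measurable.aemeasurable, hmapα]
    rw [e1, ← e2]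
    refine Measure.map_congr ?_
    filter_upwards [hX0ae] with x hx
    have h1 : s (β (A j) (σ x)) = α j x := by rw [hsβ, hsσ x hx]
    have h2 := hσs (β (A j) (σ x)) (by rw [h1]; exact hX0inv x hx (A j))
    simp only [Function.comp_apply]
    rw [← h1, h2]
  · intro ν' hν' hν'inv
    have hm := map_eq_of_image _ ν' hν'inv
    have hsν : Measure.map s ν' = μ := by
      apply hue _ (Measure.isProbabilityMeasure_map hsm.aemeasurable)
      refine image_of_map_eq (α ⟨0, hd⟩) _ ?_
      rw [Measure.map_map (α ⟨0, hd⟩).continuous.measurable hsm]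
      have : ⇑(α ⟨0, hd⟩) ∘ ⇑s = s ∘ β (A ⟨0, hd⟩) := by
        funext y
        exact (hsβ (A ⟨0, hd⟩) y).symm
      rw [this, ← Measure.map_map hsm (hβm _)]
      exact congrArg (Measure.map s) hm
    have hae : ∀ᵐ y ∂ν', s y ∈ X0 := by
      rw [← hsν] at hX0ae
      exact ae_of_ae_map hsm.aemeasurable hX0ae
    have e1 : Measure.map σ (Measure.map s ν') = Measure.map (σ ∘ s) ν' :=
      AEMeasurable.map_map_of_aemeasurable (by rwa [hsν]) hsm.aemeasurable
    rw [hsν] at e1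
    rw [e1]
    have e2 : Measure.map (σ ∘ s) ν' = Measure.map id ν' := by
      refine Measure.map_congr ?_
      filter_upwards [hae] with y hy
      exact hσs y hy
    rw [e2, Measure.map_id]
  · have e1 : Measure.map s (Measure.map σ μ) = Measure.map (s ∘ σ) μ :=
      AEMeasurable.map_map_of_aemeasurable hsm.aemeasurable hσae
    have e2 : Measure.map (s ∘ σ) μ = Measure.map id μ := by
      refine Measure.map_congr ?_
      filter_upwards [hX0ae] with x hx
      exact hsσ x hx
    refine e1.trans (e2.trans Measure.map_id)
end

section
/- Let X be a compact metric space, let α_1, …, α_d be homeomorphisms of X, let μ be a Borel probability measure on X invariant under each α_j, and let (d_n)_{n≥1} be a sequence of positive real numbers with d_n → 0. Then there exists a sequence (P_n)_{n≥1} of finite partitions of X into nonempty Borel sets such that: (i) every element of P_n has diameter less than d_n; (ii) every element of P_n has μ-null frontier; (iii) every element of P_{n+1} is contained in some element of P_n; and (iv) for every E ∈ P_n and every j = 1, …, d, the preimage α_j^{-1}(E) is a union of elements of P_{n+1}. -/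
open MeasureTheory Filter

def atomS {X : Type*} (S : Finset (Set X)) (x : X) : Set X := {y | ∀ s ∈ S, (y ∈ s ↔ x ∈ s)}

lemma mem_atomS_self {X : Type*} (S : Finset (Set X)) (x : X) : x ∈ atomS S x := fun _ _ => Iff.rfl

lemma atomS_eq {X : Type*} {S : Finset (Set X)} {x y : X} (h : y ∈ atomS S x) :
    atomS S y = atomS S x := by
  ext z
  exact ⟨fun hz s hs => (hz s hs).trans (h s hs), fun hz s hs => (hz s hs).trans (h s hs).symm⟩

lemma atomS_finite {X : Type*} (S : Finset (Set X)) : (Set.range (atomS S)).Finite := by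
  classical
  have : Set.range (atomS S) ⊆
      (fun T : Finset (Set X) => {y | ∀ s ∈ S, (y ∈ s ↔ s ∈ T)}) '' (S.powerset : Set (Finset (Set X))) := by
    rintro _ ⟨x, rfl⟩
    refine ⟨S.filter (fun s => x ∈ s), Finset.mem_coe.2 (Finset.mem_powerset.2 (Finset.filter_subset _ _)), ?_⟩
    ext y
    simp only [atomS, Set.mem_ofPred_eq, Finset.mem_filter]
    exact forall₂_congr fun s hs => by simp [hs]
  exact ((S.powerset.finite_toSet).image _).subset this

def GoodS {X : Type*} [TopologicalSpace X] [MeasurableSpace X] (μ : Measure X) (s : Set X) : Prop :=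
  MeasurableSet s ∧ μ (frontier s) = 0

lemma atomS_good {X : Type*} [TopologicalSpace X] [MeasurableSpace X] (μ : Measure X)
    (S : Finset (Set X)) (h : ∀ s ∈ S, GoodS μ s) (x : X) : GoodS μ (atomS S x) := by
  classical
  induction S using Finset.induction_on with
  | empty => simp [atomS, GoodS]
  | insert s S _ ih =>
    have hs := h s (by simp)
    have ih' := ih fun t ht => h t (by simp [ht])
    have key : ∀ t, GoodS μ t → GoodS μ (t ∩ atomS S x) := by
      intro t ht
      refine ⟨ht.1.inter ih'.1, measure_mono_null (frontier_inter_subset _ _) ?_⟩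
      exact measure_union_null (measure_mono_null Set.inter_subset_left ht.2)
        (measure_mono_null Set.inter_subset_right ih'.2)
    by_cases hx : x ∈ s
    · have : atomS (insert s S) x = s ∩ atomS S x := by
        ext y; simp [atomS, hx]
      rw [this]; exact key _ hs
    · have : atomS (insert s S) x = sᶜ ∩ atomS S x := by
        ext y; simp [atomS, hx]
      rw [this]; exact key _ ⟨hs.1.compl, by rw [frontier_compl]; exact hs.2⟩

lemma exists_coverS {X : Type*} [MetricSpace X] [CompactSpace X]
    [MeasurableSpace X] [BorelSpace X] (μ : Measure X) [IsProbabilityMeasure μ]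
    (ε : ℝ) (hε : 0 < ε) : ∃ C : Finset (Set X), (∀ s ∈ C, GoodS μ s) ∧
      (∀ x, ∃ s ∈ C, x ∈ s) ∧ ∀ s ∈ C, Metric.diam s < ε := by
  classical
  have h : ∀ x : X, ∃ r ∈ Set.Ioo 0 (ε / 4), μ (frontier (Metric.thickening r {x})) = 0 :=
    fun x => exists_null_frontier_thickening μ {x} (by linarith)
  choose r hr hr0 using h
  obtain ⟨t, ht⟩ := CompactSpace.elim_nhds_subcover (fun x => Metric.ball x (r x))
    (fun x => Metric.ball_mem_nhds x (hr x).1)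
  refine ⟨t.image fun x => Metric.ball x (r x), ?_, ?_, ?_⟩
  · simp only [Finset.mem_image]
    rintro _ ⟨x, -, rfl⟩
    exact ⟨measurableSet_ball, by rw [← Metric.thickening_singleton]; exact hr0 x⟩
  · intro x
    have : x ∈ ⋃ y ∈ t, Metric.ball y (r y) := by rw [ht]; trivial
    simpa using this
  · simp only [Finset.mem_image]
    rintro _ ⟨x, -, rfl⟩
    have := Metric.diam_ball (x := x) (hr x).1.le
    have := (hr x).2
    linarith

open Classical in
noncomputable def genS {X : Type*} {d : ℕ} (α : Fin d → X → X) (C : ℕ → Finset (Set X)) :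
    ℕ → Finset (Set X)
  | 0 => C 0
  | n + 1 => C (n + 1) ∪ (genS α C n ∪
      Finset.univ.biUnion fun j => (genS α C n).image fun s => α j ⁻¹' s)

/-- Refining sequences of partitions adapted to an invariant measure: for homeomorphisms
`α_j` preserving a Borel probability measure `μ` and any positive sequence `d_n → 0`,
there are finite Borel partitions `P_n` of `X` into nonempty sets of diameter `< d_n`
with `μ`-null frontiers, each `P_{n+1}` refining `P_n`, and each `α_j⁻¹(E)` (`E ∈ P_n`)
a union of members of `P_{n+1}`. -/
theorem stmt_7 {X : Type*} [MetricSpace X] [CompactSpace X]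
    [MeasurableSpace X] [BorelSpace X]
    (d : ℕ) (α : Fin d → X ≃ₜ X)
    (μ : Measure X) [IsProbabilityMeasure μ]
    (hinv : ∀ (j : Fin d) (E : Set X), MeasurableSet E → μ ((α j) '' E) = μ E)
    (dseq : ℕ → ℝ) (hdpos : ∀ n, 0 < dseq n)
    (hdlim : Tendsto dseq atTop (nhds 0)) :
    ∃ P : ℕ → Finset (Set X),
      (∀ n, (P n : Set (Set X)).PairwiseDisjoint id) ∧
      (∀ n, ⋃₀ (P n : Set (Set X)) = Set.univ) ∧
      (∀ n, ∀ E ∈ P n, E.Nonempty ∧ MeasurableSet E) ∧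
      (∀ n, ∀ E ∈ P n, Metric.diam E < dseq n) ∧
      (∀ n, ∀ E ∈ P n, μ (frontier E) = 0) ∧
      (∀ n, ∀ E ∈ P (n + 1), ∃ F ∈ P n, E ⊆ F) ∧
      (∀ n, ∀ E ∈ P n, ∀ j : Fin d,
        ∃ Q : Finset (Set X), Q ⊆ P (n + 1) ∧ (α j) ⁻¹' E = ⋃₀ (Q : Set (Set X))) := by
  classical
  choose C hCg hCc hCd using fun n => exists_coverS μ (dseq n) (hdpos n)
  set G := genS (fun j => (α j : X → X)) C with hG
  have hCG : ∀ n, C n ⊆ G n := by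
    intro n
    cases n with
    | zero => simp [hG, genS]
    | succ n => simp only [hG, genS]; exact Finset.subset_union_left
  have hGG : ∀ n, G n ⊆ G (n + 1) := by
    intro n s hs
    simp only [hG, genS, Finset.mem_union]
    exact Or.inr (Or.inl hs)
  have hGα : ∀ n, ∀ s ∈ G n, ∀ j, (α j) ⁻¹' s ∈ G (n + 1) := by
    intro n s hs j
    simp only [hG, genS, Finset.mem_union, Finset.mem_biUnion, Finset.mem_image]
    exact Or.inr (Or.inr ⟨j, Finset.mem_univ _, s, hs, rfl⟩)
  have hgood : ∀ n, ∀ s ∈ G n, GoodS μ s := by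
    intro n
    induction n with
    | zero => simpa [hG, genS] using hCg 0
    | succ n ih =>
      intro s hs
      simp only [hG, genS, Finset.mem_union, Finset.mem_biUnion, Finset.mem_image] at hs
      rcases hs with hs | hs | ⟨j, -, s, hs, rfl⟩
      · exact hCg _ s hs
      · exact ih s hs
      · have h := ih s hs
        refine ⟨(α j).continuous.measurable h.1, ?_⟩
        rw [← (α j).preimage_frontier,
          ← hinv j _ ((α j).continuous.measurable isClosed_frontier.measurableSet),
          Set.image_preimage_eq _ (α j).surjective]
        exact h.2
  have hmem : ∀ n E, E ∈ (atomS_finite (G n)).toFinset ↔ ∃ x, atomS (G n) x = E := by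
    intro n E; simp
  refine ⟨fun n => (atomS_finite (G n)).toFinset, ?_, ?_, ?_, ?_, ?_, ?_, ?_⟩
  · intro n E hE F hF hne
    obtain ⟨x, rfl⟩ := (hmem n E).1 hE
    obtain ⟨y, rfl⟩ := (hmem n F).1 hF
    refine Set.disjoint_left.2 fun z hz hz' => hne ?_
    exact (atomS_eq hz).symm.trans (atomS_eq hz')
  · intro n
    refine Set.eq_univ_of_forall fun x => ⟨atomS (G n) x, (hmem n _).2 ⟨x, rfl⟩, mem_atomS_self _ _⟩
  · intro n E hE
    obtain ⟨x, rfl⟩ := (hmem n E).1 hE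
    exact ⟨⟨x, mem_atomS_self _ _⟩, (atomS_good μ _ (hgood n) x).1⟩
  · intro n E hE
    obtain ⟨x, rfl⟩ := (hmem n E).1 hE
    obtain ⟨s, hs, hxs⟩ := hCc n x
    refine (Metric.diam_mono (fun y hy => (hy s (hCG n hs)).2 hxs) ?_).trans_lt (hCd n s hs)
    exact isCompact_univ.isBounded.subset (Set.subset_univ _)
  · intro n E hE
    obtain ⟨x, rfl⟩ := (hmem n E).1 hE
    exact (atomS_good μ _ (hgood n) x).2
  · intro n E hE
    obtain ⟨x, rfl⟩ := (hmem _ E).1 hE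
    exact ⟨atomS (G n) x, (hmem n _).2 ⟨x, rfl⟩, fun y hy s hs => hy s (hGG n hs)⟩
  · intro n E hE j
    obtain ⟨x, rfl⟩ := (hmem n E).1 hE
    refine ⟨(atomS_finite (G (n + 1))).toFinset.filter (· ⊆ (α j) ⁻¹' atomS (G n) x),
      Finset.filter_subset _ _, ?_⟩
    ext y
    constructor
    · intro hy
      refine ⟨atomS (G (n + 1)) y, ?_, mem_atomS_self _ _⟩
      refine Finset.mem_coe.2 (Finset.mem_filter.2 ⟨(hmem _ _).2 ⟨y, rfl⟩, ?_⟩)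
      intro z hz s hs
      exact (hz _ (hGα n s hs j)).trans (hy s hs)
    · rintro ⟨F, hF, hyF⟩
      exact (Finset.mem_filter.1 (Finset.mem_coe.1 hF)).2 hyF
end

section
/- Let X be a compact metric space, let μ be a Borel probability measure on X, and let d > 0. Then there exist finitely many pairwise disjoint Borel sets Y_1, …, Y_l with ⋃_{i=1}^{l} Y_i = X such that for each i: the diameter of Y_i is less than d; μ(∂Y_i) = 0; and Y_i = O_i ∪ S_i for some open set O_i ⊆ X and some set S_i ⊆ ∂O_i. -/
open MeasureTheory

/-- For any `d > 0`, a compact metric space with a Borel probability measure can be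
partitioned into finitely many pairwise disjoint Borel sets of diameter `< d`, each with
`μ`-null frontier and each of the form `O ∪ S` with `O` open and `S ⊆ ∂O`. -/
theorem stmt_8 {X : Type*} [MetricSpace X] [CompactSpace X]
    [MeasurableSpace X] [BorelSpace X]
    (μ : Measure X) [IsProbabilityMeasure μ] (d : ℝ) (hd : 0 < d) :
    ∃ (l : ℕ) (Y : Fin l → Set X),
      (∀ i j : Fin l, i ≠ j → Disjoint (Y i) (Y j)) ∧
      (⋃ i, Y i) = Set.univ ∧
      ∀ i : Fin l,
        MeasurableSet (Y i) ∧
        Metric.diam (Y i) < d ∧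
        μ (frontier (Y i)) = 0 ∧
        ∃ O S : Set X, IsOpen O ∧ S ⊆ frontier O ∧ Y i = O ∪ S := by
  classical
  have h1 : ∀ x : X, ∃ r : ℝ, r ∈ Set.Ioo 0 (d / 2) ∧ μ (frontier (Metric.ball x r)) = 0 := by
    intro x
    obtain ⟨r, hr, h⟩ := exists_null_frontier_thickening μ {x} (half_pos hd)
    rw [Metric.thickening_singleton] at h
    exact ⟨r, hr, h⟩
  choose r hr hμ using h1
  obtain ⟨t, ht⟩ := isCompact_univ.elim_finite_subcover (fun x : X => Metric.ball x (r x))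
    (fun x => Metric.isOpen_ball)
    (fun x _ => Set.mem_iUnion.2 ⟨x, Metric.mem_ball_self (hr x).1⟩)
  let p : Fin t.card → X := fun i => (t.equivFin.symm i : X)
  let B : Fin t.card → Set X := fun i => Metric.ball (p i) (r (p i))
  have hBo : ∀ i, IsOpen (B i) := fun i => Metric.isOpen_ball
  have hB : ∀ x, ∃ i, x ∈ B i := by
    intro x
    have := ht (Set.mem_univ x)
    simp only [Set.mem_iUnion] at this
    obtain ⟨y, hy, hxy⟩ := this
    refine ⟨t.equivFin ⟨y, hy⟩, ?_⟩
    simpa [B, p] using hxy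
  let O : Fin t.card → Set X := fun i => B i ∩ ⋂ j : Fin t.card, ⋂ _ : j < i, (closure (B j))ᶜ
  have hO : ∀ i, IsOpen (O i) := fun i => (hBo i).inter
    (isOpen_iInter_of_finite fun j => isOpen_iInter_of_finite fun _ =>
      isClosed_closure.isOpen_compl)
  have hOlt : ∀ i j, i < j → Disjoint (O i) (O j) := by
    intro i j hij
    rw [Set.disjoint_left]
    intro x hx hx'
    have := hx'.2
    simp only [Set.mem_iInter] at this
    exact this i hij (subset_closure hx.1)
  have hOd : ∀ i j, i ≠ j → Disjoint (O i) (O j) := by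
    intro i j hij
    rcases lt_or_gt_of_ne hij with h | h
    · exact hOlt i j h
    · exact (hOlt j i h).symm
  have hcov : ∀ x, (∀ j, x ∉ frontier (B j)) → ∃ i, x ∈ O i := by
    intro x hx
    obtain ⟨i, hi, hmin⟩ := WellFounded.has_min (wellFounded_lt (α := Fin t.card))
      {i | x ∈ B i} (hB x)
    refine ⟨i, hi, ?_⟩
    simp only [Set.mem_iInter]
    intro j hj hc
    apply hx j
    rw [(hBo j).frontier_eq]
    exact ⟨hc, fun h => hmin j h hj⟩
  have hfr : ∀ i, frontier (O i) ⊆ ⋃ j, frontier (B j) := by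
    intro i y hy
    by_contra hn
    simp only [Set.mem_iUnion, not_exists] at hn
    obtain ⟨k, hk⟩ := hcov y hn
    rw [(hO i).frontier_eq] at hy
    have hki : k ≠ i := fun h => hy.2 (h ▸ hk)
    exact Set.disjoint_left.1 ((hOd k i hki).closure_right (hO k)) hk hy.1
  have hdense : Dense (⋂ j, (frontier (B j))ᶜ) := by
    apply dense_iInter_of_isOpen
    · intro j; exact isClosed_frontier.isOpen_compl
    · intro j
      rw [← interior_eq_empty_iff_dense_compl, ← frontier_compl]
      exact interior_frontier (hBo j).isClosed_compl
  have hclos : ∀ x, ∃ i, x ∈ closure (O i) := by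
    intro x
    have h2 : (⋂ j, (frontier (B j))ᶜ) ⊆ ⋃ i, O i := by
      intro y hy
      simp only [Set.mem_iInter] at hy
      exact Set.mem_iUnion.2 (hcov y hy)
    have h3 := (hdense.mono h2) x
    rw [closure_iUnion_of_finite] at h3
    exact Set.mem_iUnion.1 h3
  let Y : Fin t.card → Set X := fun i =>
    closure (O i) ∩ ⋂ j : Fin t.card, ⋂ _ : j < i, (closure (O j))ᶜ
  have hYlt : ∀ i j, i < j → Disjoint (Y i) (Y j) := by
    intro i j hij
    rw [Set.disjoint_left]
    intro x hx hx'
    have := hx'.2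
    simp only [Set.mem_iInter] at this
    exact this i hij hx.1
  have hOY : ∀ i, O i ⊆ Y i := by
    intro i x hx
    refine ⟨subset_closure hx, ?_⟩
    simp only [Set.mem_iInter]
    intro j hj hc
    exact Set.disjoint_left.1 ((hOd i j hj.ne').closure_right (hO i)) hx hc
  refine ⟨t.card, Y, ?_, ?_, ?_⟩
  · intro i j hij
    rcases lt_or_gt_of_ne hij with h | h
    · exact hYlt i j h
    · exact (hYlt j i h).symm
  · rw [Set.eq_univ_iff_forall]
    intro x
    obtain ⟨i, hi, hmin⟩ := WellFounded.has_min (wellFounded_lt (α := Fin t.card))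
      {i | x ∈ closure (O i)} (hclos x)
    refine Set.mem_iUnion.2 ⟨i, hi, ?_⟩
    simp only [Set.mem_iInter]
    intro j hj hc
    exact hmin j hc hj
  · intro i
    have hYc : Y i ⊆ closure (O i) := Set.inter_subset_left
    refine ⟨?_, ?_, ?_, O i, Y i \ O i, hO i, ?_, ?_⟩
    · exact isClosed_closure.measurableSet.inter (MeasurableSet.iInter fun j =>
        MeasurableSet.iInter fun _ => isClosed_closure.measurableSet.compl)
    · have h4 : Y i ⊆ Metric.closedBall (p i) (r (p i)) :=
        hYc.trans ((closure_mono Set.inter_subset_left).trans Metric.closure_ball_subset_closedBall)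
      have h5 := Metric.diam_mono h4 Metric.isBounded_closedBall
      have h6 := Metric.diam_closedBall (x := p i) (hr (p i)).1.le
      have h7 := (hr (p i)).2
      linarith
    · have h8 : frontier (Y i) ⊆ ⋃ j, frontier (B j) := by
        refine Set.Subset.trans ?_ (hfr i)
        rw [(hO i).frontier_eq]
        exact Set.diff_subset_diff (closure_minimal hYc isClosed_closure)
          (interior_maximal (hOY i) (hO i))
      exact measure_mono_null h8 (measure_iUnion_null fun j => hμ (p j))
    · rw [(hO i).frontier_eq]
      exact Set.diff_subset_diff_left hYc
    · exact (Set.union_diff_cancel (hOY i)).symm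
end
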